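/- Let σ ∈ (1/2, 1) be fixed. There exists a constant C(σ) such that for every prime p and every real k > 0, one has Σ_{ν ≥ 0} d_{k/2}(p^ν)²/p^{2νσ} = I_0(k/p^σ)·exp(θ) for some real θ with |θ| ≤ C(σ)·k/p^{2σ}. -/

import Mathlib

open MeasureTheory Real

/-- The modified Bessel function of order 0: `I₀(t) = ∫₀¹ exp(t cos(2πθ)) dθ`. -/
noncomputable def besselI0 (t : ℝ) : ℝ :=
  ∫ θ in (0:ℝ)..1, Real.exp (t * Real.cos (2 * Real.pi * θ))

/-- The generalized divisor function at prime powers: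
`d_z(p^ν) = Γ(z+ν)/(Γ(z) ν!)`. -/
noncomputable def dzPow (z : ℝ) (ν : ℕ) : ℝ :=
  Real.Gamma (z + ν) / (Real.Gamma z * Nat.factorial ν)

/-!
The numbers `d_z(p^ν)` are the Taylor coefficients of `(1 - w)^(-z)`. Parseval's identity on the
circle `w = x e(t)` with `x = p^(-σ)` and `e(t) = exp(2πit)` turns the sum of squares into
`∫₀¹ |1 - x e(t)|^(-2z) dt`. Since `-log |1 - w| = Re w + O(|w|²)`, the integrand is
`exp(2zx cos(2πt))` times the exponential of a continuous function of size `O(z x²)`, and the mean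
value theorem for integrals replaces that function by one of its values.
-/

open scoped FourierTransform

section Parseval

theorem hasSum_sq_norm_of_hasSum_smul {𝕜 E ι : Type*} [RCLike 𝕜] [NormedAddCommGroup E]
    [InnerProductSpace 𝕜 E] {v : ι → E} (hv : Orthonormal 𝕜 v) {a : ι → 𝕜} {x : E}
    (hx : HasSum (fun i ↦ a i • v i) x) : HasSum (fun i ↦ ‖a i‖ ^ 2) (‖x‖ ^ 2) := by
  refine (hx.norm.pow 2).congr fun s ↦ ?_
  simpa using hv.orthogonalFamily.norm_sum a s

theorem hasSum_sq_norm_of_hasSum_smul_fourier {T : ℝ} [Fact (0 < T)] {ι : Type*} {k : ι → ℤ}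
    (hk : Function.Injective k) {a : ι → ℂ} {F : C(AddCircle T, ℂ)}
    (hF : HasSum (fun i ↦ a i • fourier (k i)) F) :
    HasSum (fun i ↦ ‖a i‖ ^ 2) (∫ t, ‖F t‖ ^ 2 ∂AddCircle.haarAddCircle) := by
  let L := ContinuousMap.toLp (E := ℂ) 2 (AddCircle.haarAddCircle (T := T)) ℂ
  have hLF : HasSum (fun i ↦ a i • fourierLp 2 (k i)) (L F) := by
    simpa [L, Function.comp_def] using L.hasSum hF
  have norm_LF : ‖L F‖ ^ 2 = ∫ t, ‖F t‖ ^ 2 ∂AddCircle.haarAddCircle := by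
    rw [@norm_sq_eq_re_inner ℂ, ContinuousMap.inner_toLp]
    simp only [Complex.mul_conj, Complex.normSq_eq_norm_sq, integral_complex_ofReal]
    exact Complex.ofReal_re _
  exact norm_LF ▸ hasSum_sq_norm_of_hasSum_smul (orthonormal_fourier.comp k hk) hLF

theorem hasSum_sq_norm_of_hasSum_mul_fourierChar_pow {a : ℕ → ℂ} (ha : Summable fun n ↦ ‖a n‖)
    {f : ℝ → ℂ} (hf : ∀ t, HasSum (fun n ↦ a n * (𝐞 t : ℂ) ^ n) (f t)) :
    HasSum (fun n ↦ ‖a n‖ ^ 2) (∫ t in (0 : ℝ)..1, ‖f t‖ ^ 2) := by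
  obtain ⟨F, hF⟩ : Summable fun n : ℕ ↦ a n • fourier (T := (1 : ℝ)) n :=
    .of_norm <| ha.congr fun n ↦ by rw [norm_smul, fourier_norm, mul_one]
  have F_eq_f (t : ℝ) : F (t : AddCircle (1 : ℝ)) = f t := by
    refine ((ContinuousMap.evalCLM ℂ (t : AddCircle (1 : ℝ))).hasSum hF).unique ?_
    convert! hf t using 2 with n
    rw [ContinuousMap.evalCLM_apply, ContinuousMap.smul_apply, fourier_coe_apply, smul_eq_mul,
      fourierChar_apply, ← Complex.exp_nat_mul]
    congr 2
    push_cast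
    ring
  have integral_F : ∫ t, ‖F t‖ ^ 2 ∂AddCircle.haarAddCircle = ∫ t in (0 : ℝ)..1, ‖f t‖ ^ 2 := by
    rw [AddCircle.integral_haarAddCircle, ← AddCircle.intervalIntegral_preimage (1 : ℝ) 0]
    simp [F_eq_f]
  exact integral_F ▸ hasSum_sq_norm_of_hasSum_smul_fourier Nat.cast_injective hF

end Parseval

section BinomialSeries

theorem gamma_add_nat_div_gamma_eq {z : ℝ} (hz : ∀ m : ℕ, z ≠ -m) (n : ℕ) :
    Gamma (z + n) / Gamma z = (ascPochhammer ℝ n).eval z := by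
  have h := Complex.Gamma_add_nat_div_Gamma_eq (n := n) z fun m ↦ mod_cast hz m
  rw [← ascPochhammer_map (algebraMap ℝ ℂ), ← Complex.coe_algebraMap,
    Polynomial.eval_map_algebraMap, Polynomial.aeval_algebraMap_apply] at h
  apply Complex.ofReal_injective
  simpa [← Complex.Gamma_ofReal] using h

theorem dzPow_eq_multichoose {z : ℝ} (hz : ∀ m : ℕ, z ≠ -m) (n : ℕ) :
    dzPow z n = Ring.multichoose z n := by
  have h := Ring.factorial_nsmul_multichoose_eq_ascPochhammer z n
  rw [Polynomial.ascPochhammer_smeval_eq_eval, nsmul_eq_mul] at h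
  rw [dzPow, ← div_div, gamma_add_nat_div_gamma_eq hz, ← h,
    mul_div_cancel_left₀ _ (by positivity)]

theorem hasSum_dzPow_mul_pow {z : ℝ} (hz : ∀ m : ℕ, z ≠ -m) {w : ℂ} (hw : ‖w‖ < 1) :
    HasSum (fun n ↦ (dzPow z n : ℂ) * w ^ n) ((1 - w) ^ (-z : ℂ)) := by
  have h := (Complex.one_div_one_sub_cpow_hasFPowerSeriesOnBall_zero z).hasSum (y := w)
    (by rw [← ENNReal.ofReal_one, Metric.eball_ofReal]; simpa using hw)
  rw [zero_add, one_div, ← Complex.cpow_neg] at h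
  convert! h using 2 with n
  rw [dzPow_eq_multichoose hz, Ring.multichoose_eq, FormalMultilinearSeries.ofScalars_apply_eq,
    Complex.ofReal_choose, smul_eq_mul]
  push_cast
  rfl

theorem summable_dzPow_mul_pow {z x : ℝ} (hz : ∀ m : ℕ, z ≠ -m) (hx : |x| < 1) :
    Summable fun n ↦ dzPow z n * x ^ n :=
  mod_cast (hasSum_dzPow_mul_pow (w := x) hz (by simpa using hx)).summable

end BinomialSeries

section Norms

theorem abs_log_norm_one_sub_add_re_le {w : ℂ} (hw : ‖w‖ < 1) :
    |log ‖1 - w‖ + w.re| ≤ ‖w‖ ^ 2 / (1 - ‖w‖) / 2 := by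
  calc |log ‖1 - w‖ + w.re| = |(Complex.log (1 - w)⁻¹ - w).re| := by
        rw [Complex.sub_re, Complex.log_re, norm_inv, log_inv, ← abs_neg]
        ring_nf
    _ ≤ ‖Complex.log (1 - w)⁻¹ - w‖ := Complex.abs_re_le_norm _
    _ ≤ ‖w‖ ^ 2 / (1 - ‖w‖) / 2 := Complex.norm_log_one_sub_inv_sub_self_le hw

theorem sq_norm_cpow_neg_ofReal {u : ℂ} (hu : u ≠ 0) (z : ℝ) :
    ‖u ^ (-z : ℂ)‖ ^ 2 = exp (-2 * z * log ‖u‖) := by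
  rw [← Complex.ofReal_neg, Complex.norm_cpow_real, rpow_def_of_pos (norm_pos_iff.mpr hu),
    ← exp_nat_mul]
  congr 1
  push_cast
  ring

end Norms

section Circle

theorem norm_ofReal_mul_fourierChar (x t : ℝ) : ‖(x : ℂ) * (𝐞 t : ℂ)‖ = |x| := by
  rw [norm_mul, Circle.norm_coe, mul_one, Complex.norm_real, norm_eq_abs]

theorem re_ofReal_mul_fourierChar (x t : ℝ) : ((x : ℂ) * (𝐞 t : ℂ)).re = x * cos (2 * π * t) := by
  rw [Complex.re_ofReal_mul, fourierChar_apply, Complex.exp_ofReal_mul_I_re]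

theorem one_sub_ofReal_mul_fourierChar_ne_zero {x : ℝ} (hx : |x| < 1) (t : ℝ) :
    1 - (x : ℂ) * (𝐞 t : ℂ) ≠ 0 :=
  (isUnit_one_sub_of_norm_lt_one (by rwa [norm_ofReal_mul_fourierChar])).ne_zero

theorem hasSum_sq_dzPow_mul_pow {z x : ℝ} (hz : ∀ m : ℕ, z ≠ -m) (hx : |x| < 1) :
    HasSum (fun n ↦ (dzPow z n * x ^ n) ^ 2)
      (∫ t in (0 : ℝ)..1, exp (-2 * z * log ‖1 - (x : ℂ) * (𝐞 t : ℂ)‖)) := by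
  have hsum (t : ℝ) : HasSum (fun n ↦ ((dzPow z n * x ^ n : ℝ) : ℂ) * (𝐞 t : ℂ) ^ n)
      ((1 - (x : ℂ) * (𝐞 t : ℂ)) ^ (-z : ℂ)) := by
    convert! hasSum_dzPow_mul_pow hz ((norm_ofReal_mul_fourierChar x t).trans_lt hx) using 2 with n
    push_cast
    ring
  have habs : Summable fun n ↦ ‖((dzPow z n * x ^ n : ℝ) : ℂ)‖ := by
    simpa only [Complex.norm_real] using (summable_dzPow_mul_pow hz hx).norm
  simpa only [Complex.norm_real, norm_eq_abs, sq_abs,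
    sq_norm_cpow_neg_ofReal (one_sub_ofReal_mul_fourierChar_ne_zero hx _)] using
    hasSum_sq_norm_of_hasSum_mul_fourierChar_pow habs hsum

theorem exists_integral_exp_log_norm_eq_besselI0_mul_exp (z : ℝ) {x : ℝ} (hx : |x| < 1) :
    ∃ θ : ℝ, |θ| ≤ |z| * (x ^ 2 / (1 - |x|)) ∧
      ∫ t in (0 : ℝ)..1, exp (-2 * z * log ‖1 - (x : ℂ) * (𝐞 t : ℂ)‖) =
        besselI0 (2 * z * x) * exp θ := by
  let δ (t : ℝ) : ℝ := log ‖1 - (x : ℂ) * (𝐞 t : ℂ)‖ + x * cos (2 * π * t)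
  have δ_le (t : ℝ) : |δ t| ≤ x ^ 2 / (1 - |x|) / 2 := by
    have h := abs_log_norm_one_sub_add_re_le ((norm_ofReal_mul_fourierChar x t).trans_lt hx)
    rwa [norm_ofReal_mul_fourierChar, re_ofReal_mul_fourierChar, sq_abs] at h
  have δ_cont : Continuous δ := by
    refine .add (.log (by fun_prop) fun t ↦ ?_) (by fun_prop)
    exact norm_ne_zero_iff.mpr (one_sub_ofReal_mul_fourierChar_ne_zero hx t)
  obtain ⟨c, -, hc⟩ := exists_eq_const_mul_intervalIntegral_of_nonneg (a := 0) (b := 1)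
    (μ := volume) (f := fun t ↦ exp (-2 * z * δ t)) (g := fun t ↦ exp (2 * z * x * cos (2 * π * t)))
    (by fun_prop) (Continuous.intervalIntegrable (by fun_prop) _ _) fun _ _ ↦ (exp_pos _).le
  refine ⟨-2 * z * δ c, ?_, ?_⟩
  · calc |-2 * z * δ c| = 2 * |z| * |δ c| := by simp [abs_mul]
      _ ≤ 2 * |z| * (x ^ 2 / (1 - |x|) / 2) := by gcongr; exact δ_le c
      _ = |z| * (x ^ 2 / (1 - |x|)) := by ring
  · rw [besselI0, mul_comm (intervalIntegral _ _ _ _), ← hc]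
    congr 1 with t
    rw [← exp_add]
    congr 1
    ring

end Circle

theorem sq_rpow_neg_pow {q : ℝ} (hq : 0 ≤ q) (σ : ℝ) (n : ℕ) :
    ((q ^ (-σ)) ^ n) ^ 2 = (q ^ (2 * (n : ℝ) * σ))⁻¹ := by
  rw [← rpow_neg hq, ← pow_mul, ← rpow_mul_natCast hq]
  congr 1
  push_cast
  ring

theorem stmt4_general {σ : ℝ} (hσ : 0 < σ) :
    ∃ C > (0 : ℝ), ∀ q : ℝ, 2 ≤ q → ∀ k : ℝ, (∀ m : ℕ, k / 2 ≠ -m) →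
      ∃ θ : ℝ, |θ| ≤ C * |k| / q ^ (2 * σ) ∧
        HasSum (fun ν : ℕ ↦ dzPow (k / 2) ν ^ 2 / q ^ (2 * (ν : ℝ) * σ))
          (besselI0 (k / q ^ σ) * exp θ) := by
  have two_rpow_lt : (2 : ℝ) ^ (-σ) < 1 :=
    rpow_lt_one_of_one_lt_of_neg one_lt_two (neg_lt_zero.mpr hσ)
  have one_sub_rpow_pos : 0 < 1 - (2 : ℝ) ^ (-σ) := sub_pos.mpr two_rpow_lt
  refine ⟨(2 * (1 - 2 ^ (-σ)))⁻¹, by positivity, fun q hq k hk ↦ ?_⟩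
  have q_nonneg : 0 ≤ q := two_pos.le.trans hq
  have rpow_le : q ^ (-σ) ≤ 2 ^ (-σ) := rpow_le_rpow_of_nonpos two_pos hq (neg_nonpos.mpr hσ.le)
  have abs_rpow : |q ^ (-σ)| = q ^ (-σ) := abs_of_nonneg (rpow_nonneg q_nonneg _)
  have abs_rpow_lt : |q ^ (-σ)| < 1 := abs_rpow.trans_lt (rpow_le.trans_lt two_rpow_lt)
  obtain ⟨θ, hθ, integral_eq⟩ :=
    exists_integral_exp_log_norm_eq_besselI0_mul_exp (k / 2) abs_rpow_lt
  refine ⟨θ, ?_, ?_⟩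
  · have sq_rpow : (q ^ (-σ)) ^ 2 = (q ^ (2 * σ))⁻¹ := by simpa using sq_rpow_neg_pow q_nonneg σ 1
    calc |θ| ≤ |k / 2| * ((q ^ (-σ)) ^ 2 / (1 - |q ^ (-σ)|)) := hθ
      _ ≤ |k / 2| * ((q ^ (-σ)) ^ 2 / (1 - 2 ^ (-σ))) := by rw [abs_rpow]; gcongr
      _ = (2 * (1 - 2 ^ (-σ)))⁻¹ * |k| / q ^ (2 * σ) := by
        rw [sq_rpow, abs_div, abs_two]
        field_simp
  · have bessel_arg : 2 * (k / 2) * q ^ (-σ) = k / q ^ σ := by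
      rw [mul_div_cancel₀ k two_ne_zero, rpow_neg q_nonneg, div_eq_mul_inv]
    have hsum := hasSum_sq_dzPow_mul_pow hk abs_rpow_lt
    rw [integral_eq, bessel_arg] at hsum
    simpa only [mul_pow, sq_rpow_neg_pow q_nonneg, ← div_eq_mul_inv] using hsum

theorem stmt4 (σ : ℝ) (hσ : 1/2 < σ) (hσ1 : σ < 1) :
    ∃ C > (0:ℝ), ∀ p : ℕ, p.Prime → ∀ k : ℝ, 0 < k →
      ∃ θ : ℝ, |θ| ≤ C * k / (p:ℝ) ^ (2*σ) ∧
        (∑' ν : ℕ, dzPow (k/2) ν ^ 2 / (p:ℝ) ^ (2*(ν:ℝ)*σ))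
          = besselI0 (k / (p:ℝ) ^ σ) * Real.exp θ := by
  obtain ⟨C, hC, h⟩ := stmt4_general (one_half_pos.trans hσ)
  refine ⟨C, hC, fun p hp k hk ↦ ?_⟩
  obtain ⟨θ, hθ, hsum⟩ := h p (mod_cast hp.two_le) k fun m ↦ by linarith [m.cast_nonneg (α := ℝ)]
  exact ⟨θ, by rwa [abs_of_pos hk] at hθ, hsum.tsum_eq⟩
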